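/- arXiv:math/9901156 — 2 statements merged into one kernel-verified Lean document; each statement's English description precedes it below -/
import Mathlib

section
/- Let p be a prime, let 1 ≤ r ≤ s be integers, set k = s − r, and let d = diag(1, p^k, p^{3k}, p^{2k}) ∈ GL₄(ℚ_p). For t ≥ 1 let I_t be the level-p^t Iwahori subgroup of Sp₄(ℤ_p). Then, as subsets of M₄(ℚ_p), {d⁻¹·g·d : g ∈ I_s} ∩ I_r = {d⁻¹·g·d : g ∈ I_r} ∩ I_r. -/
open scoped Pointwise

/-- The standard symplectic matrix `J = (0, 1₂; −1₂, 0)` in `M₄(R)`. -/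
def J4 (R : Type*) [CommRing R] : Matrix (Fin 4) (Fin 4) R :=
  !![0, 0, 1, 0;
     0, 0, 0, 1;
     -1, 0, 0, 0;
     0, -1, 0, 0]

/-- The six sub-Borel matrix positions `(2,1),(3,1),(3,2),(3,4),(4,1),(4,2)`
(written with 0-based indices). -/
def subBorelPos : Set (Fin 4 × Fin 4) :=
  {(1, 0), (2, 0), (2, 1), (2, 3), (3, 0), (3, 1)}

/-- The level-`p^t` Iwahori subgroup of `Sp₄(ℤ_p)`, viewed as a subset of
`M₄(ℚ_p)`: symplectic matrices with `ℤ_p`-entries whose entries at the six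
sub-Borel positions lie in `p^t·ℤ_p`. -/
def Iwahori (p : ℕ) [Fact p.Prime] (t : ℕ) : Set (Matrix (Fin 4) (Fin 4) ℚ_[p]) :=
  {g | g.transpose * J4 ℚ_[p] * g = J4 ℚ_[p] ∧
    (∀ i j, ∃ c : ℤ_[p], (c : ℚ_[p]) = g i j) ∧
    ∀ q ∈ subBorelPos, ∃ c : ℤ_[p], (((p : ℤ_[p]) ^ t * c : ℤ_[p]) : ℚ_[p]) = g q.1 q.2}

/-- The diagonal matrix `d = diag(1, p^k, p^{3k}, p^{2k})` in `GL₄(ℚ_p)`. -/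
noncomputable def dMat (p : ℕ) [Fact p.Prime] (k : ℕ) : Matrix (Fin 4) (Fin 4) ℚ_[p] :=
  Matrix.diagonal ![1, (p : ℚ_[p]) ^ k, (p : ℚ_[p]) ^ (3 * k), (p : ℚ_[p]) ^ (2 * k)]

/-- The matrix computation underlying Hida's level-lowering Lemma 3.1: for
`1 ≤ r ≤ s`, `k = s − r` and `d = diag(1, p^k, p^{3k}, p^{2k})`, one has
`d⁻¹·I_s·d ∩ I_r = d⁻¹·I_r·d ∩ I_r` as subsets of `M₄(ℚ_p)`. -/
theorem stmt_3 (p : ℕ) [Fact p.Prime] (r s : ℕ) (hr : 1 ≤ r) (hrs : r ≤ s) :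
    {m : Matrix (Fin 4) (Fin 4) ℚ_[p] |
        ∃ g ∈ Iwahori p s, m = (dMat p (s - r))⁻¹ * g * dMat p (s - r)} ∩ Iwahori p r =
      {m : Matrix (Fin 4) (Fin 4) ℚ_[p] |
        ∃ g ∈ Iwahori p r, m = (dMat p (s - r))⁻¹ * g * dMat p (s - r)} ∩ Iwahori p r := by
  obtain ⟨k, rfl⟩ := Nat.exists_eq_add_of_le hrs
  have hk : r + k - r = k := by omega
  rw [hk]
  have hp : (p : ℚ_[p]) ≠ 0 := by
    exact_mod_cast (Fact.out : p.Prime).ne_zero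
  ext m
  constructor
  · rintro ⟨⟨g, ⟨h1, h2, h3⟩, rfl⟩, hm⟩
    refine ⟨⟨g, ⟨h1, h2, ?_⟩, rfl⟩, hm⟩
    intro q hq
    obtain ⟨c, hc⟩ := h3 q hq
    refine ⟨(p : ℤ_[p]) ^ k * c, ?_⟩
    rw [← hc, pow_add, mul_assoc]
  · rintro ⟨⟨g, ⟨h1, h2, h3⟩, hmg⟩, hm⟩
    refine ⟨⟨g, ⟨h1, h2, ?_⟩, hmg⟩, hm⟩
    have hu : IsUnit (dMat p k).det := by
      rw [dMat, Matrix.det_diagonal, Fin.prod_univ_four]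
      simp [hp]
    have key : dMat p k * m = g * dMat p k := by
      rw [hmg, Matrix.mul_assoc, Matrix.mul_nonsing_inv_cancel_left _ _ hu]
    have ent : ∀ i j, ![1, (p : ℚ_[p]) ^ k, (p : ℚ_[p]) ^ (3 * k), (p : ℚ_[p]) ^ (2 * k)] i * m i j
        = g i j * ![1, (p : ℚ_[p]) ^ k, (p : ℚ_[p]) ^ (3 * k), (p : ℚ_[p]) ^ (2 * k)] j := by
      intro i j
      have := congrFun (congrFun key i) j
      rwa [dMat, Matrix.diagonal_mul, Matrix.mul_diagonal] at this
    -- exponents: `e i = e j + k + extra` at each sub-Borel position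
    have fin : ∀ (i j : Fin 4) (a b : ℕ), (i, j) ∈ subBorelPos →
        ![1, (p : ℚ_[p]) ^ k, (p : ℚ_[p]) ^ (3 * k), (p : ℚ_[p]) ^ (2 * k)] j = (p : ℚ_[p]) ^ a →
        ![1, (p : ℚ_[p]) ^ k, (p : ℚ_[p]) ^ (3 * k), (p : ℚ_[p]) ^ (2 * k)] i
          = (p : ℚ_[p]) ^ (a + k + b) →
        ∃ c : ℤ_[p], (((p : ℤ_[p]) ^ (r + k) * c : ℤ_[p]) : ℚ_[p]) = g i j := by
      intro i j a b hij hj hi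
      obtain ⟨c, hc⟩ := hm.2.2 (i, j) hij
      have h := ent i j
      rw [hi, hj] at h
      refine ⟨(p : ℤ_[p]) ^ b * c, ?_⟩
      apply mul_right_cancel₀ (pow_ne_zero a hp)
      rw [← h]
      simp only at hc
      rw [← hc]
      push_cast
      ring
    rintro ⟨i, j⟩ hq
    have hq' := hq
    simp only [subBorelPos, Set.mem_insert_iff, Set.mem_singleton_iff, Prod.mk.injEq] at hq'
    rcases hq' with ⟨rfl, rfl⟩ | ⟨rfl, rfl⟩ | ⟨rfl, rfl⟩ | ⟨rfl, rfl⟩ | ⟨rfl, rfl⟩ | ⟨rfl, rfl⟩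
    · exact fin _ _ 0 0 hq (by simp) (by simp)
    · exact fin _ _ 0 (2 * k) hq (by simp) (by simp; ring)
    · exact fin _ _ k k hq (by simp) (by simp; ring)
    · exact fin _ _ (2 * k) 0 hq (by simp) (by simp; ring)
    · exact fin _ _ 0 k hq (by simp) (by simp; ring)
    · exact fin _ _ k 0 hq (by simp) (by simp; ring)
end

section
/- Let p be a prime and r ≥ 1. Let I_r be the level-p^r Iwahori subgroup of Sp₄(ℤ_p) and let D = {diag(p^{a₁}, p^{a₂}, p^{b−a₁}, p^{b−a₂}) : a₁, a₂, b ∈ ℕ, a₁ ≤ a₂, 2a₂ ≤ b} (these are symplectic similitudes with multiplier p^b). Then for all d, d′ ∈ D one has the equality of subsets of M₄(ℚ_p): (I_r·d·I_r)·(I_r·d′·I_r) = I_r·(d·d′)·I_r. In particular the set Δ_r = I_r·D·I_r is closed under matrix multiplication (it is a sub-semigroup of GL₄(ℚ_p)). -/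
open scoped Pointwise

/-- The set of dominant diagonal symplectic similitudes
`diag(p^{a₁}, p^{a₂}, p^{b−a₁}, p^{b−a₂})` with `a₁ ≤ a₂` and `2a₂ ≤ b`. -/
def Dset (p : ℕ) [Fact p.Prime] : Set (Matrix (Fin 4) (Fin 4) ℚ_[p]) :=
  {d | ∃ a₁ a₂ b : ℕ, a₁ ≤ a₂ ∧ 2 * a₂ ≤ b ∧
    d = Matrix.diagonal
      ![(p : ℚ_[p]) ^ a₁, (p : ℚ_[p]) ^ a₂, (p : ℚ_[p]) ^ (b - a₁), (p : ℚ_[p]) ^ (b - a₂)]}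

namespace IwahoriAux

variable {p : ℕ} [Fact p.Prime]

/-- Lower bound-type predicate: `x ∈ p^r ℤ_p`. -/
def Low (p : ℕ) [Fact p.Prime] (r : ℕ) (x : ℚ_[p]) : Prop :=
  ∃ c : ℤ_[p], (((p : ℤ_[p]) ^ r * c : ℤ_[p]) : ℚ_[p]) = x

lemma low_iff (r : ℕ) (x : ℚ_[p]) : Low p r x ↔ ∃ c : ℤ_[p], x = (p : ℚ_[p]) ^ r * c := by
  constructor
  · rintro ⟨c, rfl⟩; exact ⟨c, by push_cast; rfl⟩
  · rintro ⟨c, rfl⟩; exact ⟨c, by push_cast; rfl⟩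

lemma Low.mk' {r : ℕ} (c : ℤ_[p]) : Low p r ((p : ℚ_[p]) ^ r * c) := (low_iff _ _).2 ⟨c, rfl⟩

lemma Low.add {r : ℕ} {x y : ℚ_[p]} (hx : Low p r x) (hy : Low p r y) : Low p r (x + y) := by
  rw [low_iff] at *
  obtain ⟨c, rfl⟩ := hx; obtain ⟨d, rfl⟩ := hy
  exact ⟨c + d, by push_cast; ring⟩

lemma Low.neg {r : ℕ} {x : ℚ_[p]} (hx : Low p r x) : Low p r (-x) := by
  rw [low_iff] at *
  obtain ⟨c, rfl⟩ := hx
  exact ⟨-c, by push_cast; ring⟩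

lemma Low.mul {r : ℕ} {x y : ℚ_[p]} (hx : Low p r x) (hy : Low p 0 y) : Low p r (x * y) := by
  rw [low_iff] at *
  obtain ⟨c, rfl⟩ := hx; obtain ⟨d, rfl⟩ := hy
  exact ⟨c * d, by push_cast; ring⟩

lemma Low.mul' {r : ℕ} {x y : ℚ_[p]} (hx : Low p 0 x) (hy : Low p r y) : Low p r (x * y) := by
  rw [mul_comm]; exact hy.mul hx

lemma Low.int {r : ℕ} {x : ℚ_[p]} (hx : Low p r x) : Low p 0 x := by
  rw [low_iff] at *
  obtain ⟨c, rfl⟩ := hx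
  exact ⟨p ^ r * c, by push_cast; ring⟩

lemma low_zero (r : ℕ) : Low p r 0 := (low_iff _ _).2 ⟨0, by simp⟩
lemma low_one : Low p 0 1 := (low_iff _ _).2 ⟨1, by simp⟩
lemma low_p (n : ℕ) : Low p 0 ((p : ℚ_[p]) ^ n) := (low_iff _ _).2 ⟨p ^ n, by simp⟩

/-- if `x * y + e = 1` with `e` divisible by `p`, then `x` is a unit. -/
lemma unit_of {r : ℕ} (hr : 1 ≤ r) {x y e : ℚ_[p]} (hx : Low p 0 x) (hy : Low p 0 y)
    (he : Low p r e) (h : x * y + e = 1) : x ≠ 0 ∧ Low p 0 x⁻¹ := by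
  rw [low_iff] at *
  obtain ⟨a, rfl⟩ := hx; obtain ⟨b, rfl⟩ := hy; obtain ⟨c, rfl⟩ := he
  have h1 : a * b + p ^ r * c = 1 := by
    apply Subtype.coe_injective
    push_cast
    simpa using h
  have hu : IsUnit a := by
    have h2 : IsUnit (a * b) := by
      have h3 := IsLocalRing.isUnit_or_isUnit_of_add_one h1
      rcases h3 with h3 | h3
      · exact h3
      · exfalso
        have h4 : IsUnit ((p : ℤ_[p]) ^ r) := isUnit_of_mul_isUnit_left h3
        have h5 : IsUnit (p : ℤ_[p]) := (isUnit_pow_iff (by omega)).1 h4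
        exact PadicInt.prime_p.not_isUnit h5
    exact isUnit_of_mul_isUnit_left h2
  obtain ⟨v, hv⟩ := hu.exists_right_inv
  have h6 : (a : ℚ_[p]) * v = 1 := by
    rw [← PadicInt.coe_mul, hv]; simp
  have h7 : (a : ℚ_[p]) ≠ 0 := by
    intro h; rw [h] at h6; simp at h6
  refine ⟨by simpa using h7, v, ?_⟩
  simp only [pow_zero, one_mul]
  exact inv_eq_of_mul_eq_one_right h6

end IwahoriAux

namespace IwahoriAux
open Matrix
variable {p : ℕ} [Fact p.Prime]

/-- Unfolded membership. -/
lemma mem_iff (r : ℕ) (g : Matrix (Fin 4) (Fin 4) ℚ_[p]) :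
    g ∈ Iwahori p r ↔ g.transpose * J4 ℚ_[p] * g = J4 ℚ_[p] ∧ (∀ i j, Low p 0 (g i j)) ∧
      Low p r (g 1 0) ∧ Low p r (g 2 0) ∧ Low p r (g 2 1) ∧ Low p r (g 2 3) ∧
      Low p r (g 3 0) ∧ Low p r (g 3 1) := by
  simp [Iwahori, subBorelPos, Low]

lemma one_mem (r : ℕ) : (1 : Matrix (Fin 4) (Fin 4) ℚ_[p]) ∈ Iwahori p r := by
  rw [mem_iff]
  refine ⟨by simp, ?_, ?_⟩
  · intro i j
    by_cases h : i = j
    · subst h; simpa using low_one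
    · simpa [Matrix.one_apply_ne h] using low_zero 0
  · simp [low_zero]

lemma symp_mul {g h : Matrix (Fin 4) (Fin 4) ℚ_[p]}
    (hg : g.transpose * J4 ℚ_[p] * g = J4 ℚ_[p]) (hh : h.transpose * J4 ℚ_[p] * h = J4 ℚ_[p]) :
    (g * h).transpose * J4 ℚ_[p] * (g * h) = J4 ℚ_[p] := by
  calc (g * h).transpose * J4 ℚ_[p] * (g * h)
      = h.transpose * (g.transpose * J4 ℚ_[p] * g) * h := by
        rw [Matrix.transpose_mul]; simp only [Matrix.mul_assoc]
    _ = _ := by rw [hg, hh]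

lemma mul_mem {r : ℕ} {g h : Matrix (Fin 4) (Fin 4) ℚ_[p]} (hg : g ∈ Iwahori p r)
    (hh : h ∈ Iwahori p r) : g * h ∈ Iwahori p r := by
  rw [mem_iff] at *
  obtain ⟨gs, gi, g10, g20, g21, g23, g30, g31⟩ := hg
  obtain ⟨hs, hi, h10, h20, h21, h23, h30, h31⟩ := hh
  refine ⟨symp_mul gs hs, ?_, ?_, ?_, ?_, ?_, ?_, ?_⟩
  · intro i j
    rw [Matrix.mul_apply, Fin.sum_univ_four]
    exact ((((gi _ _).mul (hi _ _)).add ((gi _ _).mul (hi _ _))).add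
      ((gi _ _).mul (hi _ _))).add ((gi _ _).mul (hi _ _))
  all_goals
    rw [Matrix.mul_apply, Fin.sum_univ_four]
    refine Low.add (Low.add (Low.add ?_ ?_) ?_) ?_ <;>
    first
    | exact Low.mul (by assumption) (hi _ _)
    | exact Low.mul' (gi _ _) (by assumption)

/-- First lower unipotent family. -/
noncomputable def n1 (x y z : ℚ_[p]) : Matrix (Fin 4) (Fin 4) ℚ_[p] :=
  !![1, 0, 0, 0; x, 1, 0, 0; y, z, 1, -x; z, 0, 0, 1]

/-- Second lower unipotent family. -/
noncomputable def n2 (w : ℚ_[p]) : Matrix (Fin 4) (Fin 4) ℚ_[p] :=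
  !![1, 0, 0, 0; 0, 1, 0, 0; 0, 0, 1, 0; 0, w, 0, 1]

lemma n1_mem {r : ℕ} {x y z : ℚ_[p]} (hx : Low p r x) (hy : Low p r y) (hz : Low p r z) :
    n1 x y z ∈ Iwahori p r := by
  rw [mem_iff]
  refine ⟨?_, ?_, ?_⟩
  · ext i j
    fin_cases i <;> fin_cases j <;>
      simp [n1, J4, Matrix.mul_apply, Fin.sum_univ_four]
    all_goals ring
  · intro i j
    fin_cases i <;> fin_cases j <;>
      simp [n1, low_zero, low_one, hx.int, hy.int, hz.int, hx.neg.int]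
  · simp [n1, low_zero, hx, hy, hz, hx.neg]

lemma n2_mem {r : ℕ} {w : ℚ_[p]} (hw : Low p r w) : n2 w ∈ Iwahori p r := by
  rw [mem_iff]
  refine ⟨?_, ?_, ?_⟩
  · ext i j
    fin_cases i <;> fin_cases j <;>
      simp [n2, J4, Matrix.mul_apply, Fin.sum_univ_four]
  · intro i j
    fin_cases i <;> fin_cases j <;> simp [n2, low_zero, low_one, hw.int]
  · simp [n2, low_zero, hw]

lemma n1_inv (x y z : ℚ_[p]) : n1 (-x) (-y) (-z) * n1 x y z = 1 := by
  ext i j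
  fin_cases i <;> fin_cases j <;> simp [n1, Matrix.mul_apply, Fin.sum_univ_four]
  all_goals ring

lemma n2_inv (w : ℚ_[p]) : n2 (-w) * n2 w = 1 := by
  ext i j
  fin_cases i <;> fin_cases j <;> simp [n2, Matrix.mul_apply, Fin.sum_univ_four]

lemma omega_entry {g : Matrix (Fin 4) (Fin 4) ℚ_[p]}
    (hg : g.transpose * J4 ℚ_[p] * g = J4 ℚ_[p]) (i j : Fin 4) :
    g 0 i * g 2 j + g 1 i * g 3 j - g 2 i * g 0 j - g 3 i * g 1 j = J4 ℚ_[p] i j := by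
  rw [← hg]
  simp [Matrix.mul_apply, Fin.sum_univ_four, J4]
  ring

lemma g00_unit {r : ℕ} (hr : 1 ≤ r) {g : Matrix (Fin 4) (Fin 4) ℚ_[p]} (hg : g ∈ Iwahori p r) :
    g 0 0 ≠ 0 ∧ Low p 0 (g 0 0)⁻¹ := by
  rw [mem_iff] at hg
  obtain ⟨gs, gi, g10, g20, g21, g23, g30, g31⟩ := hg
  have h := omega_entry gs 0 2
  refine unit_of hr (gi 0 0) (gi 2 2)
    (((g10.mul (gi 3 2)).add (g20.mul (gi 0 2)).neg).add (g30.mul (gi 1 2)).neg) ?_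
  simp [J4] at h
  linear_combination h

lemma g11_unit {r : ℕ} (hr : 1 ≤ r) {g : Matrix (Fin 4) (Fin 4) ℚ_[p]} (hg : g ∈ Iwahori p r) :
    g 1 1 ≠ 0 ∧ Low p 0 (g 1 1)⁻¹ := by
  rw [mem_iff] at hg
  obtain ⟨gs, gi, g10, g20, g21, g23, g30, g31⟩ := hg
  have h := omega_entry gs 1 3
  refine unit_of hr (gi 1 1) (gi 3 3)
    (((g23.mul (gi 0 1)).add (g21.mul (gi 0 3)).neg).add (g31.mul (gi 1 3)).neg) ?_
  simp [J4] at h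
  linear_combination h

/-- Iwahori decomposition. -/
lemma decomp {r : ℕ} (hr : 1 ≤ r) {g : Matrix (Fin 4) (Fin 4) ℚ_[p]} (hg : g ∈ Iwahori p r) :
    ∃ x y z w : ℚ_[p], ∃ k ∈ Iwahori p r, Low p r x ∧ Low p r y ∧ Low p r z ∧ Low p r w ∧
      k 1 0 = 0 ∧ k 2 0 = 0 ∧ k 2 1 = 0 ∧ k 2 3 = 0 ∧ k 3 0 = 0 ∧ k 3 1 = 0 ∧
      g = n1 x y z * (n2 w * k) := by
  obtain ⟨u0, ui⟩ := g00_unit hr hg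
  have hg' := hg
  rw [mem_iff] at hg'
  obtain ⟨gs, gi, g10, g20, g21, g23, g30, g31⟩ := hg'
  set x := g 1 0 * (g 0 0)⁻¹ with hx
  set y := g 2 0 * (g 0 0)⁻¹ with hy
  set z := g 3 0 * (g 0 0)⁻¹ with hz
  have lx : Low p r x := g10.mul ui
  have ly : Low p r y := g20.mul ui
  have lz : Low p r z := g30.mul ui
  obtain ⟨h, hdef⟩ : ∃ h, h = n1 (-x) (-y) (-z) * g := ⟨_, rfl⟩
  have hmem : h ∈ Iwahori p r := by
    rw [hdef]; exact mul_mem (n1_mem lx.neg ly.neg lz.neg) hg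
  have gh : g = n1 x y z * h := by
    have := n1_inv (-x) (-y) (-z)
    simp only [neg_neg] at this
    rw [hdef, ← Matrix.mul_assoc, this, Matrix.one_mul]
  have h10 : h 1 0 = 0 := by
    rw [hdef]; simp [n1, Matrix.mul_apply, Fin.sum_univ_four, hx, u0]
  have h20 : h 2 0 = 0 := by
    rw [hdef]; simp [n1, Matrix.mul_apply, Fin.sum_univ_four, hx, hy, hz, u0]; ring
  have h30 : h 3 0 = 0 := by
    rw [hdef]; simp [n1, Matrix.mul_apply, Fin.sum_univ_four, hz, u0]
  obtain ⟨v0, vi⟩ := g11_unit hr hmem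
  obtain ⟨t0, -⟩ := g00_unit hr hmem
  have hmem' := hmem
  rw [mem_iff] at hmem'
  obtain ⟨hs, hi, -, -, -, -, -, l31⟩ := hmem'
  have h21 : h 2 1 = 0 := by
    have := omega_entry hs 0 1
    simpa [h10, h20, h30, J4, t0] using this
  have h23 : h 2 3 = 0 := by
    have := omega_entry hs 0 3
    simpa [h10, h20, h30, J4, t0] using this
  set w := h 3 1 * (h 1 1)⁻¹ with hw
  have lw : Low p r w := l31.mul vi
  refine ⟨x, y, z, w, n2 (-w) * h, mul_mem (n2_mem lw.neg) hmem, lx, ly, lz, lw,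
    ?_, ?_, ?_, ?_, ?_, ?_, ?_⟩
  · simp [n2, Matrix.mul_apply, Fin.sum_univ_four, h10]
  · simp [n2, Matrix.mul_apply, Fin.sum_univ_four, h20]
  · simp [n2, Matrix.mul_apply, Fin.sum_univ_four, h21]
  · simp [n2, Matrix.mul_apply, Fin.sum_univ_four, h23]
  · simp [n2, Matrix.mul_apply, Fin.sum_univ_four, h10, h30]
  · simp [n2, Matrix.mul_apply, Fin.sum_univ_four, hw, v0]
  · have := n2_inv (-w)
    simp only [neg_neg] at this
    rw [← Matrix.mul_assoc (n2 w), this, Matrix.one_mul]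
    exact gh

/-- Normal form of elements of `D`. -/
noncomputable def dd (p : ℕ) [Fact p.Prime] (a m n : ℕ) : Matrix (Fin 4) (Fin 4) ℚ_[p] :=
  Matrix.diagonal ![(p : ℚ_[p]) ^ a, (p : ℚ_[p]) ^ (a + m), (p : ℚ_[p]) ^ (a + 2 * m + n),
    (p : ℚ_[p]) ^ (a + m + n)]

lemma dset_eq {d : Matrix (Fin 4) (Fin 4) ℚ_[p]} (hd : d ∈ Dset p) : ∃ a m n, d = dd p a m n := by
  obtain ⟨a₁, a₂, b, h1, h2, rfl⟩ := hd
  obtain ⟨m, rfl⟩ := Nat.exists_eq_add_of_le h1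
  obtain ⟨n, rfl⟩ := Nat.exists_eq_add_of_le h2
  refine ⟨a₁, m, n, ?_⟩
  rw [dd, show 2 * (a₁ + m) + n - a₁ = a₁ + 2 * m + n by omega,
    show 2 * (a₁ + m) + n - (a₁ + m) = a₁ + m + n by omega]

lemma dset_mul {d d' : Matrix (Fin 4) (Fin 4) ℚ_[p]} (hd : d ∈ Dset p) (hd' : d' ∈ Dset p) :
    d * d' ∈ Dset p := by
  obtain ⟨a₁, a₂, b, h1, h2, rfl⟩ := hd
  obtain ⟨a₁', a₂', b', h1', h2', rfl⟩ := hd'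
  refine ⟨a₁ + a₁', a₂ + a₂', b + b', by omega, by omega, ?_⟩
  rw [show b + b' - (a₁ + a₁') = (b - a₁) + (b' - a₁') by omega,
    show b + b' - (a₂ + a₂') = (b - a₂) + (b' - a₂') by omega, Matrix.diagonal_mul_diagonal]
  congr 1
  ext i
  fin_cases i <;> simp [pow_add]

lemma d_n1 (a m n : ℕ) (x y z : ℚ_[p]) :
    dd p a m n * n1 x y z = n1 ((p : ℚ_[p]) ^ m * x) ((p : ℚ_[p]) ^ (2 * m + n) * y)
      ((p : ℚ_[p]) ^ (m + n) * z) * dd p a m n := by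
  ext i j
  fin_cases i <;> fin_cases j <;> simp [n1, dd]
  all_goals ring

lemma d_n2 (a m n : ℕ) (w : ℚ_[p]) :
    dd p a m n * n2 w = n2 ((p : ℚ_[p]) ^ n * w) * dd p a m n := by
  ext i j
  fin_cases i <;> fin_cases j <;> simp [n2, dd]
  all_goals ring

/-- The conjugate of an upper triangular matrix. -/
noncomputable def kc (m n : ℕ) (k : Matrix (Fin 4) (Fin 4) ℚ_[p]) : Matrix (Fin 4) (Fin 4) ℚ_[p] :=
  !![k 0 0, (p : ℚ_[p]) ^ m * k 0 1, (p : ℚ_[p]) ^ (2 * m + n) * k 0 2,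
      (p : ℚ_[p]) ^ (m + n) * k 0 3;
    0, k 1 1, (p : ℚ_[p]) ^ (m + n) * k 1 2, (p : ℚ_[p]) ^ n * k 1 3;
    0, 0, k 2 2, 0;
    0, 0, (p : ℚ_[p]) ^ m * k 3 2, k 3 3]

lemma k_d {r : ℕ} (a m n : ℕ) {k : Matrix (Fin 4) (Fin 4) ℚ_[p]} (hk : k ∈ Iwahori p r)
    (k10 : k 1 0 = 0) (k20 : k 2 0 = 0) (k21 : k 2 1 = 0) (k23 : k 2 3 = 0) (k30 : k 3 0 = 0)
    (k31 : k 3 1 = 0) : kc m n k ∈ Iwahori p r ∧ k * dd p a m n = dd p a m n * kc m n k := by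
  have e : k * dd p a m n = dd p a m n * kc m n k := by
    ext i j
    fin_cases i <;> fin_cases j <;> simp [kc, dd, k10, k20, k21, k23, k30, k31]
    all_goals ring
  refine ⟨?_, e⟩
  rw [mem_iff] at *
  obtain ⟨ks, ki, -⟩ := hk
  have dj : (dd p a m n).transpose * J4 ℚ_[p] * dd p a m n
      = (p : ℚ_[p]) ^ (2 * a + 2 * m + n) • J4 ℚ_[p] := by
    ext i j
    fin_cases i <;> fin_cases j <;> simp [dd, J4]
    all_goals ring
  have p0 : (p : ℚ_[p]) ≠ 0 := by
    exact_mod_cast (Fact.out : p.Prime).ne_zero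
  refine ⟨?_, ?_, ?_⟩
  · have : (p : ℚ_[p]) ^ (2 * a + 2 * m + n) • ((kc m n k).transpose * J4 ℚ_[p] * kc m n k)
        = (p : ℚ_[p]) ^ (2 * a + 2 * m + n) • J4 ℚ_[p] := by
      calc _ = (kc m n k).transpose * ((dd p a m n).transpose * J4 ℚ_[p] * dd p a m n)
              * kc m n k := by rw [dj]; simp
        _ = (dd p a m n * kc m n k).transpose * J4 ℚ_[p] * (dd p a m n * kc m n k) := by
          rw [Matrix.transpose_mul]; simp only [Matrix.mul_assoc]
        _ = (dd p a m n).transpose * (k.transpose * J4 ℚ_[p] * k) * dd p a m n := by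
          rw [← e, Matrix.transpose_mul]; simp only [Matrix.mul_assoc]
        _ = _ := by rw [ks, dj]
    exact smul_right_injective _ (pow_ne_zero _ p0) this
  · intro i j
    fin_cases i <;> fin_cases j <;> simp [kc, low_zero, ki, Low.mul (low_p _) (ki _ _)]
  · simp [kc, low_zero]

lemma key {r : ℕ} (hr : 1 ≤ r) {d d' g : Matrix (Fin 4) (Fin 4) ℚ_[p]} (hd : d ∈ Dset p)
    (hd' : d' ∈ Dset p) (hg : g ∈ Iwahori p r) :
    ∃ u ∈ Iwahori p r, ∃ v ∈ Iwahori p r, d * g * d' = u * (d * d') * v := by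
  obtain ⟨a, m, n, rfl⟩ := dset_eq hd
  obtain ⟨a', m', n', rfl⟩ := dset_eq hd'
  obtain ⟨x, y, z, w, k, hk, lx, ly, lz, lw, k10, k20, k21, k23, k30, k31, rfl⟩ := decomp hr hg
  obtain ⟨hk', e⟩ := k_d a' m' n' hk k10 k20 k21 k23 k30 k31
  refine ⟨_, mul_mem (n1_mem ((low_p m).mul' lx) ((low_p (2 * m + n)).mul' ly)
    ((low_p (m + n)).mul' lz)) (n2_mem ((low_p n).mul' lw)), _, hk', ?_⟩
  rw [← Matrix.mul_assoc, d_n1, Matrix.mul_assoc (n1 _ _ _) (dd p a m n),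
    ← Matrix.mul_assoc (dd p a m n), d_n2]
  simp only [Matrix.mul_assoc]
  rw [e]

lemma mem_dc {r : ℕ} {S : Set (Matrix (Fin 4) (Fin 4) ℚ_[p])} {X} :
    X ∈ Iwahori p r * S * Iwahori p r ↔
    ∃ u ∈ Iwahori p r, ∃ s ∈ S, ∃ v ∈ Iwahori p r, X = u * s * v := by
  constructor
  · rintro ⟨_, ⟨u, hu, s, hs, rfl⟩, v, hv, rfl⟩
    exact ⟨u, hu, s, hs, v, hv, rfl⟩
  · rintro ⟨u, hu, s, hs, v, hv, rfl⟩
    exact ⟨_, ⟨u, hu, s, hs, rfl⟩, v, hv, rfl⟩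

lemma key2 {r : ℕ} (hr : 1 ≤ r) {d d' u v u' v' : Matrix (Fin 4) (Fin 4) ℚ_[p]}
    (hd : d ∈ Dset p) (hd' : d' ∈ Dset p) (hu : u ∈ Iwahori p r) (hv : v ∈ Iwahori p r)
    (hu' : u' ∈ Iwahori p r) (hv' : v' ∈ Iwahori p r) :
    ∃ s ∈ Iwahori p r, ∃ t ∈ Iwahori p r, (u * d * v) * (u' * d' * v') = s * (d * d') * t := by
  obtain ⟨s, hs, t, ht, e⟩ := key hr hd hd' (mul_mem hv hu')
  refine ⟨u * s, mul_mem hu hs, t * v', mul_mem ht hv', ?_⟩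
  calc _ = u * (d * (v * u') * d') * v' := by simp only [Matrix.mul_assoc]
    _ = _ := by rw [e]; simp only [Matrix.mul_assoc]

end IwahoriAux

/-- Multiplicativity of Iwahori double cosets (Proposition 2.1):
`(I_r·d·I_r)·(I_r·d′·I_r) = I_r·(d·d′)·I_r` for `d, d′ ∈ D`; in particular
`Δ_r = I_r·D·I_r` is closed under matrix multiplication. -/
theorem stmt_6 (p : ℕ) [Fact p.Prime] (r : ℕ) (hr : 1 ≤ r) :
    (∀ d ∈ Dset p, ∀ d' ∈ Dset p,
      (Iwahori p r * ({d} : Set (Matrix (Fin 4) (Fin 4) ℚ_[p])) * Iwahori p r) *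
          (Iwahori p r * ({d'} : Set (Matrix (Fin 4) (Fin 4) ℚ_[p])) * Iwahori p r) =
        Iwahori p r * ({d * d'} : Set (Matrix (Fin 4) (Fin 4) ℚ_[p])) * Iwahori p r) ∧
    ∀ x ∈ Iwahori p r * Dset p * Iwahori p r, ∀ y ∈ Iwahori p r * Dset p * Iwahori p r,
      x * y ∈ Iwahori p r * Dset p * Iwahori p r := by
  constructor
  · intro d hd d' hd'
    ext X
    constructor
    · rintro ⟨A, hA, B, hB, rfl⟩
      obtain ⟨u, hu, _, rfl, v, hv, rfl⟩ := IwahoriAux.mem_dc.1 hA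
      obtain ⟨u', hu', _, rfl, v', hv', rfl⟩ := IwahoriAux.mem_dc.1 hB
      obtain ⟨s, hs, t, ht, e⟩ := IwahoriAux.key2 hr hd hd' hu hv hu' hv'
      exact IwahoriAux.mem_dc.2 ⟨s, hs, _, rfl, t, ht, e⟩
    · intro hX
      obtain ⟨u, hu, _, rfl, v, hv, rfl⟩ := IwahoriAux.mem_dc.1 hX
      refine ⟨u * d * 1, IwahoriAux.mem_dc.2 ⟨u, hu, d, rfl, 1, IwahoriAux.one_mem r, rfl⟩,
        1 * d' * v, IwahoriAux.mem_dc.2 ⟨1, IwahoriAux.one_mem r, d', rfl, v, hv, rfl⟩, ?_⟩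
      simp [Matrix.mul_assoc]
  · intro x hx y hy
    obtain ⟨u, hu, d, hd, v, hv, rfl⟩ := IwahoriAux.mem_dc.1 hx
    obtain ⟨u', hu', d', hd', v', hv', rfl⟩ := IwahoriAux.mem_dc.1 hy
    obtain ⟨s, hs, t, ht, e⟩ := IwahoriAux.key2 hr hd hd' hu hv hu' hv'
    exact IwahoriAux.mem_dc.2 ⟨s, hs, _, IwahoriAux.dset_mul hd hd', t, ht, e⟩
end
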